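/- Let m ≥ 1 and λ ∈ (0, 2). For all u, v ∈ ℝ^m, one has g(u,v) = Σ_{i=1}^m (u_i + v_i − 1)^2 + λ·(Σ_{i=1}^m (|u_i| + |v_i|) − √(Σ_{i=1}^m (u_i^2 + v_i^2))) ≥ g*(λ), and equality holds if and only if (u_i, v_i) = (c(λ), 0) or (u_i, v_i) = (0, c(λ)) for every i ∈ [m]. In particular, the global minimum of g over ℝ^m × ℝ^m is g*(λ) and its set of minimizers is Y*. -/

import Mathlib

/-- The excess `|a| + |b| - |a + b|` controls the cross term `-2ab`. -/
lemma neg_two_mul_le_abs_excess (a b : ℝ) :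
    -(2 * (a * b)) ≤ (|a| + |b| - |a + b|) * (|a + b| + (|a| + |b| - |a + b|) / 2) := by
  have hw : (|a| + |b|) ^ 2 = a ^ 2 + b ^ 2 + 2 * |a * b| := by
    rw [abs_mul, add_sq, sq_abs, sq_abs]; ring
  have hx : |a + b| ^ 2 = (a + b) ^ 2 := sq_abs _
  have h : -(a * b) ≤ |a * b| := neg_le_abs _
  nlinarith [le_abs_self (a * b)]

/-- The Euclidean norm of `(u, v)` exceeds that of `u + v` by at most a fraction of the
`ℓ¹` excess `∑ (|uᵢ| + |vᵢ| - |uᵢ + vᵢ|)`. -/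
lemma sqrt_sum_sq_le_add_excess {ι : Type*} [Fintype ι] (u v : ι → ℝ) :
    Real.sqrt (∑ i, (u i ^ 2 + v i ^ 2)) ≤ Real.sqrt (∑ i, (u i + v i) ^ 2)
      + 3 / 4 * ∑ i, (|u i| + |v i| - |u i + v i|) := by
  set X := Real.sqrt (∑ i, (u i + v i) ^ 2) with hX
  set D := ∑ i, (|u i| + |v i| - |u i + v i|) with hD
  have hX0 : 0 ≤ X := Real.sqrt_nonneg _
  have hXsq : X ^ 2 = ∑ i, (u i + v i) ^ 2 :=
    Real.sq_sqrt (Finset.sum_nonneg fun i _ => sq_nonneg _)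
  have hd : ∀ i, 0 ≤ |u i| + |v i| - |u i + v i| := fun i => sub_nonneg.2 (abs_add_le _ _)
  have hD0 : 0 ≤ D := Finset.sum_nonneg fun i _ => hd i
  have hxX : ∀ i, |u i + v i| ≤ X := fun i => Real.abs_le_sqrt
    (Finset.single_le_sum (f := fun i => (u i + v i) ^ 2) (fun j _ => sq_nonneg _)
      (Finset.mem_univ i))
  have hdD : ∀ i, |u i| + |v i| - |u i + v i| ≤ D := fun i =>
    Finset.single_le_sum (f := fun i => |u i| + |v i| - |u i + v i|) (fun j _ => hd j)
      (Finset.mem_univ i)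
  have hcross : ∑ i, -(2 * (u i * v i)) ≤ D * (X + D / 2) := by
    rw [hD, Finset.sum_mul, ← hD]
    refine Finset.sum_le_sum fun i _ => (neg_two_mul_le_abs_excess _ _).trans ?_
    exact mul_le_mul_of_nonneg_left (by linarith [hxX i, hdD i]) (hd i)
  have hsplit : ∑ i, (u i ^ 2 + v i ^ 2) = X ^ 2 + ∑ i, -(2 * (u i * v i)) := by
    rw [hXsq, ← Finset.sum_add_distrib]
    exact Finset.sum_congr rfl fun i _ => by ring
  refine Real.sqrt_le_iff.2 ⟨by positivity, ?_⟩
  rw [hsplit]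
  nlinarith [mul_nonneg hX0 hD0, sq_nonneg D]

/-- Quadratic growth of `x ↦ ‖x - 1‖² + lam (‖x‖₁ - ‖x‖₂)` around the constant vector `α / s`,
where `s = √m` and `α = (lam + (2 - lam) s) / 2`. -/
lemma sq_add_abs_sub_sqrt_growth {m : ℕ} {lam s α : ℝ} (hlam0 : 0 < lam)
    (hα : 0 < α) (hs : 0 < s) (hsm : s ^ 2 = m) (hαs : 2 * α = lam + (2 - lam) * s)
    (x : Fin m → ℝ) :
    m - α ^ 2 + (1 - lam / (2 * α)) * ∑ i, (x i - α / s) ^ 2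
      ≤ (∑ i, (x i - 1) ^ 2) + lam * ((∑ i, |x i|) - Real.sqrt (∑ i, x i ^ 2)) := by
  set X := Real.sqrt (∑ i, x i ^ 2) with hX
  have hXsq : X ^ 2 = ∑ i, x i ^ 2 := Real.sq_sqrt (Finset.sum_nonneg fun i _ => sq_nonneg _)
  have hshift : ∀ a : ℝ, ∑ i, (x i - a) ^ 2 = X ^ 2 - 2 * a * ∑ i, x i + m * a ^ 2 := by
    intro a
    simp only [sub_sq, Finset.sum_add_distrib, Finset.sum_sub_distrib, hXsq, Finset.mul_sum,
      Finset.sum_const, Finset.card_univ, Fintype.card_fin, nsmul_eq_mul]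
    congr 2
    exact Finset.sum_congr rfl fun i _ => by ring
  have habs : ∑ i, x i ≤ ∑ i, |x i| := Finset.sum_le_sum fun i _ => le_abs_self _
  have hyoung : lam * X ≤ lam / (2 * α) * X ^ 2 + lam * α / 2 := by
    have h : lam / (2 * α) * X ^ 2 + lam * α / 2 - lam * X = lam / (2 * α) * (X - α) ^ 2 := by
      field_simp
      ring
    have : 0 ≤ lam / (2 * α) * (X - α) ^ 2 := by positivity
    linarith
  have hcoef : (1 - lam / (2 * α)) * (α / s) = (2 - lam) / 2 := by
    field_simp
    linarith
  have hconst : (1 - lam / (2 * α)) * (m * (α / s) ^ 2) = α ^ 2 - lam * α / 2 := by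
    rw [← hsm]
    field_simp
  rw [hshift, hshift]
  have hlin : (1 - lam / (2 * α)) * (2 * (α / s) * ∑ i, x i) = (2 - lam) * ∑ i, x i := by
    linear_combination 2 * (∑ i, x i) * hcoef
  nlinarith [mul_le_mul_of_nonneg_left habs hlam0.le]

/-- For `λ ∈ (0,2)` and all `u, v ∈ ℝᵐ`,
`g(u,v) = ∑(uᵢ+vᵢ−1)² + λ(∑(|uᵢ|+|vᵢ|) − √(∑(uᵢ²+vᵢ²))) ≥ g*(λ)`, with equality iff
`(uᵢ, vᵢ) = (c(λ), 0)` or `(0, c(λ))` for every `i` (so the minimizer set is `Y*`). -/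
theorem g_min_unconstrained (m : ℕ) (hm : 1 ≤ m) (lam : ℝ)
    (hlam0 : 0 < lam) (hlam2 : lam < 2)
    (c gstar : ℝ)
    (hc : c = (lam / Real.sqrt m - lam + 2) / 2)
    (hgstar : gstar = lam * ((1 - lam / 4) * m + (lam / 2 - 1) * Real.sqrt m - lam / 4))
    (g : (Fin m → ℝ) → (Fin m → ℝ) → ℝ)
    (hg : ∀ u v, g u v = (∑ i, (u i + v i - 1) ^ 2)
      + lam * ((∑ i, (|u i| + |v i|)) - Real.sqrt (∑ i, (u i ^ 2 + v i ^ 2)))) :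
    ∀ u v : Fin m → ℝ,
      gstar ≤ g u v ∧
      (g u v = gstar ↔ ∀ i, (u i = c ∧ v i = 0) ∨ (u i = 0 ∧ v i = c)) := by
  intro u v
  set s := Real.sqrt m with hs
  have hm1 : (1 : ℝ) ≤ m := by exact_mod_cast hm
  have hs1 : 1 ≤ s := Real.one_le_sqrt.2 hm1
  have hs0 : 0 < s := by linarith
  have hsm : s ^ 2 = m := Real.sq_sqrt (by linarith)
  set α := (lam + (2 - lam) * s) / 2 with hα
  have hα1 : 1 ≤ α := by nlinarith
  have hα0 : 0 < α := by linarith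
  have hcα : c = α / s := by
    rw [hc, hα]
    field_simp
    ring
  have hc0 : 0 < c := hcα ▸ div_pos hα0 hs0
  have hsc : s * c = α := by
    rw [hcα]
    field_simp
  have hgα : gstar = m - α ^ 2 := by
    rw [hgstar, hα, ← hsm]
    ring
  have hβ : 0 < 1 - lam / (2 * α) := by
    rw [sub_pos, div_lt_one (by positivity)]
    linarith
  have hgrowth := sq_add_abs_sub_sqrt_growth hlam0 hα0 hs0 hsm (by rw [hα]; ring)
    (fun i => u i + v i)
  have hnorm := sqrt_sum_sq_le_add_excess u v
  have hd : ∀ i, 0 ≤ |u i| + |v i| - |u i + v i| := fun i => sub_nonneg.2 (abs_add_le _ _)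
  have hexcess : ∑ i, (|u i| + |v i| - |u i + v i|)
      = ∑ i, (|u i| + |v i|) - ∑ i, |u i + v i| := Finset.sum_sub_distrib _ _
  have hD0 : 0 ≤ ∑ i, (|u i| + |v i| - |u i + v i|) := Finset.sum_nonneg fun i _ => hd i
  have hQ0 : 0 ≤ ∑ i, (u i + v i - c) ^ 2 := Finset.sum_nonneg fun i _ => sq_nonneg _
  rw [← hcα, ← hgα] at hgrowth
  have hlower : gstar + (1 - lam / (2 * α)) * ∑ i, (u i + v i - c) ^ 2
      + lam / 4 * ∑ i, (|u i| + |v i| - |u i + v i|) ≤ g u v := by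
    rw [hg]
    nlinarith [mul_le_mul_of_nonneg_left hnorm hlam0.le]
  have hQ := mul_nonneg hβ.le hQ0
  have hD := mul_nonneg (by positivity : 0 ≤ lam / 4) hD0
  refine ⟨by linarith, fun heq => ?_, fun h => ?_⟩
  · have hQz : ∑ i, (u i + v i - c) ^ 2 = 0 :=
      (mul_eq_zero.1 (by linarith : (1 - lam / (2 * α)) * _ = 0)).resolve_left hβ.ne'
    have hDz : ∑ i, (|u i| + |v i| - |u i + v i|) = 0 :=
      (mul_eq_zero.1 (by linarith : lam / 4 * _ = 0)).resolve_left (by positivity)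
    have hx : ∀ i, u i + v i = c := fun i => by
      have := (Finset.sum_eq_zero_iff_of_nonneg fun i _ => sq_nonneg _).1 hQz i
        (Finset.mem_univ i)
      linarith [pow_eq_zero_iff two_ne_zero |>.1 this]
    have hw : ∀ i, |u i| + |v i| = |u i + v i| := fun i => by
      have := (Finset.sum_eq_zero_iff_of_nonneg fun i _ => hd i).1 hDz i (Finset.mem_univ i)
      linarith
    have huv : ∀ i, 0 ≤ u i * v i := fun i => by
      have h := congrArg (· ^ 2) (hw i)
      simp only [sq_abs, add_sq, mul_assoc, ← abs_mul] at h
      linarith [abs_nonneg (u i * v i)]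
    have hnorm_ge : Real.sqrt (∑ i, (u i + v i) ^ 2) ≤ Real.sqrt (∑ i, (u i ^ 2 + v i ^ 2)) := by
      rw [hg] at heq
      rw [hQz] at hgrowth
      nlinarith
    have hsum : ∑ i, (u i + v i) ^ 2 ≤ ∑ i, (u i ^ 2 + v i ^ 2) :=
      (Real.sqrt_le_sqrt_iff (Finset.sum_nonneg fun i _ => by positivity)).1 hnorm_ge
    have hprod : ∑ i, u i * v i = 0 := by
      have : ∑ i, (u i + v i) ^ 2 = ∑ i, (u i ^ 2 + v i ^ 2) + 2 * ∑ i, u i * v i := by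
        rw [Finset.mul_sum, ← Finset.sum_add_distrib]
        exact Finset.sum_congr rfl fun i _ => by ring
      linarith [Finset.sum_nonneg fun i (_ : i ∈ Finset.univ) => huv i]
    intro i
    have hi := (Finset.sum_eq_zero_iff_of_nonneg fun i _ => huv i).1 hprod i (Finset.mem_univ i)
    rcases mul_eq_zero.1 hi with h0 | h0
    · exact Or.inr ⟨h0, by linarith [hx i]⟩
    · exact Or.inl ⟨by linarith [hx i], h0⟩
  · have h1 : ∀ i, (u i + v i - 1) ^ 2 = (c - 1) ^ 2 := fun i => by
      rcases h i with ⟨a, b⟩ | ⟨a, b⟩ <;> simp [a, b]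
    have h2 : ∀ i, |u i| + |v i| = c := fun i => by
      rcases h i with ⟨a, b⟩ | ⟨a, b⟩ <;> simp [a, b, abs_of_pos hc0]
    have h3 : ∀ i, u i ^ 2 + v i ^ 2 = c ^ 2 := fun i => by
      rcases h i with ⟨a, b⟩ | ⟨a, b⟩ <;> simp [a, b]
    have hα2 : 2 * (s * c) = lam + (2 - lam) * s := by rw [hsc, hα]; ring
    rw [hg, hgα, ← hsc]
    simp only [h1, h2, h3, Finset.sum_const, Finset.card_univ, Fintype.card_fin, nsmul_eq_mul]
    rw [Real.sqrt_mul (by linarith), Real.sqrt_sq hc0.le, ← hs, ← hsm]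
    linear_combination s * c * hα2
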